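/- If the discrete Sobolev inner product is sequentially-ordered and μ belongs to the Nevai class M(0,1), then for every k ≥ 1 there exists a constant M_ρ > 0 such that ∫_{−1}^{1} S⁺_{n+k,2}(x) ρ(x) dμ(x) ≤ M_ρ for all n ∈ ℤ≥0; in other words, the total masses μ_{ρ,n}([−1,1]) of the measures dμ_{ρ,n} = S⁺_{n+k,2} ρ dμ are uniformly bounded in n. -/

import Mathlib

open MeasureTheory Polynomial Filter
open scoped Classical

noncomputable section

/-- The discrete Sobolev inner product with a single derivative order `d j` at each
mass point `c j`, with weight `η j`. -/
def sobInner (μ : Measure ℝ) {N : ℕ} (c : Fin N → ℝ) (d : Fin N → ℕ) (η : Fin N → ℝ)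
    (f g : Polynomial ℝ) : ℝ :=
  (∫ x in Set.Icc (-1:ℝ) 1, f.eval x * g.eval x ∂μ) +
    ∑ j, η j * ((derivative^[d j] f).eval (c j)) * ((derivative^[d j] g).eval (c j))

/-- The general discrete Sobolev inner product with weights `η j i` for the `i`-th
derivatives, `0 ≤ i ≤ d j`, at each mass point `c j`. -/
def sobInner2 (μ : Measure ℝ) {N : ℕ} (c : Fin N → ℝ) (d : Fin N → ℕ) (η : Fin N → ℕ → ℝ)
    (f g : Polynomial ℝ) : ℝ :=
  (∫ x in Set.Icc (-1:ℝ) 1, f.eval x * g.eval x ∂μ) +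
    ∑ j, ∑ i ∈ Finset.range (d j + 1),
      η j i * ((derivative^[i] f).eval (c j)) * ((derivative^[i] g).eval (c j))

/-- Sequential order for the data of a discrete Sobolev inner product:
`d` is nondecreasing and each `c k` lies outside the convex hull of
`(-1,1) ∪ {c 1, …, c (k-1)}`. -/
def SeqOrdered {N : ℕ} (c : Fin N → ℝ) (d : Fin N → ℕ) : Prop :=
  (∀ i j : Fin N, i ≤ j → d i ≤ d j) ∧
    ∀ k : Fin N, c k ∉ convexHull ℝ (Set.Ioo (-1:ℝ) 1 ∪ c '' {j : Fin N | j < k})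

/-- The polynomial ρ(x) = ∏_{c j < -1} (x - c j)^(d j + 1) · ∏_{c j > 1} (c j - x)^(d j + 1). -/
def rhoPoly {N : ℕ} (c : Fin N → ℝ) (d : Fin N → ℕ) : Polynomial ℝ :=
  (∏ j ∈ Finset.univ.filter (fun j => c j < -1), (X - C (c j)) ^ (d j + 1)) *
    ∏ j ∈ Finset.univ.filter (fun j => (1:ℝ) < c j), (C (c j) - X) ^ (d j + 1)

/-- ν = number of mass points greater than 1. -/
def nuCount {N : ℕ} (c : Fin N → ℝ) : ℕ :=
  (Finset.univ.filter (fun j : Fin N => (1:ℝ) < c j)).card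

/-- μ belongs to the Nevai class M(0,1): supp μ = [-1,1] and the monic orthogonal
polynomials of μ satisfy a three-term recurrence with aₙ → 1/2 and bₙ → 0. -/
def NevaiClass (μ : Measure ℝ) : Prop :=
  μ (Set.Icc (-1:ℝ) 1)ᶜ = 0 ∧
  (∀ x ∈ Set.Icc (-1:ℝ) 1, ∀ ε > 0, 0 < μ (Metric.ball x ε)) ∧
  ∃ (P : ℕ → Polynomial ℝ) (a b : ℕ → ℝ),
    (∀ n, (P n).Monic) ∧ (∀ n, (P n).natDegree = n) ∧
    (∀ n, ∀ m < n, (∫ x in Set.Icc (-1:ℝ) 1, x ^ m * (P n).eval x ∂μ) = 0) ∧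
    P 0 = 1 ∧ P 1 = X - C (b 0) ∧
    (∀ n, P (n + 2) = (X - C (b (n + 1))) * P (n + 1) - C ((a (n + 1)) ^ 2) * P n) ∧
    Tendsto a atTop (nhds (1 / 2)) ∧ Tendsto b atTop (nhds 0)

/-- The segment [-1,1] regarded as a subset of ℂ. -/
def segIcc : Set ℂ := Complex.ofReal '' Set.Icc (-1:ℝ) 1

/-- Markov-type function: z ↦ ∫ q(x) / (z - x) w(x) dμ(x). -/
def markovHat (μ : Measure ℝ) (w q : Polynomial ℝ) (z : ℂ) : ℂ :=
  ∫ x in Set.Icc (-1:ℝ) 1, ((q.eval x * w.eval x : ℝ) : ℂ) / (z - (x : ℂ)) ∂μ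

/-- Associated function: z ↦ ∫ (p(z) - p(x)) / (z - x) · q(x) w(x) dμ(x). -/
def assocFun (μ : Measure ℝ) (w q p : Polynomial ℝ) (z : ℂ) : ℂ :=
  ∫ x in Set.Icc (-1:ℝ) 1,
    ((aeval z p - ((p.eval x : ℝ) : ℂ)) / (z - (x : ℂ))) * ((q.eval x * w.eval x : ℝ) : ℂ) ∂μ

/-- A function changes sign at `t` if arbitrarily close to `t`, on the left and right,
it takes values of opposite signs. -/
def SignChangeAt (p : Polynomial ℝ) (t : ℝ) : Prop :=
  ∀ δ > 0, ∃ x ∈ Set.Ioo (t - δ) t, ∃ y ∈ Set.Ioo t (t + δ), p.eval x * p.eval y < 0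

/-- N₀(f; A): number of zeros of `f` in `A`, counted with multiplicity. -/
def N0 (f : Polynomial ℝ) (A : Set ℝ) : ℕ :=
  (f.roots.filter (fun x => x ∈ A)).card

/-!
Let `s = ∏ⱼ (X - cⱼ) ^ (dⱼ + 1)`, of degree `D`. The discrete part of the Sobolev product vanishes
on multiples of `s`, so the extremal property of `Sₙ` compares its Sobolev norm with the
`L²(μ)` norm of `s X Pₘ`, where `n = m + D + 1`. If `z` is a zero of `Sₙ`, then `Sₙ = (X - z) Q`
with `Q` monic of degree `n - 1`, and the extremal property of `Pₙ₋₁` gives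
`(|z| - 1)² ‖Pₙ₋₁‖² ≤ ‖Sₙ‖² ≤ C ‖Pₘ‖²`. In the Nevai class `‖Pₙ₊₁‖² / ‖Pₙ‖² = aₙ₊₁² → 1/4`, so
the two `L²(μ)` norms are comparable and the zeros of `Sₙ` are bounded uniformly in `n`. Hence the
monic factors `S_{n,2}`, of fixed degree, are bounded on `[-1, 1]` uniformly in `n`.
-/

section Polynomial

variable {R : Type*} [CommRing R]

lemma degree_sub_lt_of_monic {n : ℕ} {p q : R[X]} (hp : p.Monic) (hq : q.Monic)
    (hpn : p.natDegree = n) (hqn : q.natDegree = n) : (p - q).degree < n := by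
  nontriviality R
  have hp_degree : p.degree = n := by rw [degree_eq_natDegree hp.ne_zero, hpn]
  have hq_degree : q.degree = n := by rw [degree_eq_natDegree hq.ne_zero, hqn]
  rw [← hp_degree]
  exact degree_sub_lt_left (hp_degree.trans hq_degree.symm) hp.ne_zero (hp.trans hq.symm)

lemma norm_eval_le_pow_natDegree_of_splits {𝕜 : Type*} [NormedField 𝕜] {p : 𝕜[X]}
    (hp : p.Monic) (hsplits : p.Splits) {x : 𝕜} {r : ℝ} (hroots : ∀ z ∈ p.roots, ‖x - z‖ ≤ r) :
    ‖p.eval x‖ ≤ r ^ p.natDegree := by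
  have hle : ((p.roots.map (x - ·)).map normHom).prod ≤ r ^ (p.roots.map (x - ·)).card :=
    Multiset.prod_map_le_pow_card (by simp) (Multiset.forall_mem_map_iff.2 hroots)
  rwa [← map_multiset_prod, Multiset.card_map, ← hsplits.natDegree_eq_card_roots,
    ← hsplits.eval_eq_prod_roots_of_monic hp] at hle

end Polynomial

section MonicOrthogonal

variable {R : Type*} [CommRing R]

/-- `S` is the monic orthogonal polynomial of degree `n` for the bilinear form `B`. Orthogonality is
tested on the monomials of lower degree. -/
structure IsMonicOrthogonal (B : LinearMap.BilinForm R R[X]) (n : ℕ) (S : R[X]) : Prop where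
  monic : S.Monic
  natDegree_eq : S.natDegree = n
  apply_X_pow : ∀ m < n, B (X ^ m) S = 0

namespace IsMonicOrthogonal

variable {B : LinearMap.BilinForm R R[X]} {n : ℕ} {S : R[X]}

lemma apply_eq_zero_of_degree_lt (hS : IsMonicOrthogonal B n S) {q : R[X]} (hq : q.degree < n) :
    B q S = 0 := by
  have hspan : degreeLT R n ≤ (B.flip S).ker := by
    rw [degreeLT_eq_span_X_pow, Submodule.span_le]
    intro p hp
    obtain ⟨m, hm, rfl⟩ : ∃ m < n, X ^ m = p := by simpa using hp
    exact hS.apply_X_pow m hm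
  exact hspan (mem_degreeLT.2 hq)

lemma apply_eq_apply_self (hS : IsMonicOrthogonal B n S) {f : R[X]} (hf : f.Monic)
    (hfn : f.natDegree = n) : B f S = B S S := by
  have hsub := hS.apply_eq_zero_of_degree_lt
    (degree_sub_lt_of_monic hf hS.monic hfn hS.natDegree_eq)
  rwa [map_sub, LinearMap.sub_apply, sub_eq_zero] at hsub

lemma apply_self_le [PartialOrder R] [IsOrderedRing R] (hB : B.IsPosSemidef)
    (hS : IsMonicOrthogonal B n S) {f : R[X]} (hf : f.Monic) (hfn : f.natDegree = n) :
    B S S ≤ B f f := by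
  have hfS : B f S = B S S := hS.apply_eq_apply_self hf hfn
  have hSf : B S f = B S S := by rw [hB.isSymm.eq, hfS]
  have hnonneg : 0 ≤ B (f - S) (f - S) := hB.isNonneg.nonneg _
  simpa [hfS, hSf] using hnonneg

lemma apply_self_succ (hB : ∀ p q, B (X * p) q = B p (X * q)) {P₀ P₁ P₂ : R[X]}
    (hP₀ : IsMonicOrthogonal B n P₀) (hP₁ : IsMonicOrthogonal B (n + 1) P₁)
    (hP₂ : IsMonicOrthogonal B (n + 2) P₂) {a b : R}
    (hrec : P₂ = (X - C b) * P₁ - C a * P₀) : B P₁ P₁ = a * B P₀ P₀ := by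
  nontriviality R
  have hdegree {m : ℕ} (hm : n < m) : P₀.degree < m := by
    rw [degree_eq_natDegree hP₀.monic.ne_zero, hP₀.natDegree_eq]
    exact_mod_cast hm
  have hP₀P₁ : B P₀ P₁ = 0 := hP₁.apply_eq_zero_of_degree_lt (hdegree (by omega))
  have hP₀P₂ : B P₀ P₂ = 0 := hP₂.apply_eq_zero_of_degree_lt (hdegree (by omega))
  have hXP₁ : X * P₁ = P₂ + b • P₁ + a • P₀ := by
    rw [hrec, smul_eq_C_mul, smul_eq_C_mul]
    ring
  calc
    B P₁ P₁ = B (X * P₀) P₁ := by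
      refine (hP₁.apply_eq_apply_self (monic_X.mul hP₀.monic) ?_).symm
      rw [monic_X.natDegree_mul hP₀.monic, natDegree_X, hP₀.natDegree_eq, add_comm]
    _ = B P₀ (X * P₁) := hB _ _
    _ = a * B P₀ P₀ := by simp [hXP₁, hP₀P₁, hP₀P₂]

end IsMonicOrthogonal

end MonicOrthogonal

section MomentForm

variable (μ : Measure ℝ) [IsFiniteMeasureOnCompacts μ] (K : TopologicalSpace.Compacts ℝ)

lemma integrableOn_eval (p : ℝ[X]) : IntegrableOn (fun x ↦ p.eval x) K μ :=
  p.continuous.continuousOn.integrableOn_compact K.isCompact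

/-- The linear functional `p ↦ ∫_K p dμ` on polynomials. -/
def momentFunctional : ℝ[X] →ₗ[ℝ] ℝ where
  toFun p := ∫ x in K, p.eval x ∂μ
  map_add' p q := by
    simpa only [eval_add] using
      integral_add (integrableOn_eval μ K p) (integrableOn_eval μ K q)
  map_smul' a p := by
    simpa only [eval_smul] using! integral_smul a fun x ↦ p.eval x

/-- The `L²(μ|_K)` inner product `⟨p, q⟩ = ∫_K p q dμ` on polynomials. -/
def momentForm : LinearMap.BilinForm ℝ ℝ[X] :=
  (LinearMap.mul ℝ ℝ[X]).compr₂ (momentFunctional μ K)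

lemma momentForm_apply (p q : ℝ[X]) :
    momentForm μ K p q = ∫ x in K, p.eval x * q.eval x ∂μ := by
  simp [momentForm, momentFunctional]

lemma momentForm_X_mul (p q : ℝ[X]) : momentForm μ K (X * p) q = momentForm μ K p (X * q) := by
  simp [momentForm, mul_left_comm, mul_assoc]

lemma momentForm_self_nonneg (p : ℝ[X]) : 0 ≤ momentForm μ K p p := by
  rw [momentForm_apply]
  exact integral_nonneg fun x ↦ mul_self_nonneg _

lemma isPosSemidef_momentForm : (momentForm μ K).IsPosSemidef where
  eq p q := by simp [momentForm, mul_comm]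
  isNonneg := ⟨momentForm_self_nonneg μ K⟩

variable {K}

lemma momentForm_self_le_of_sq_eval_le {p q : ℝ[X]}
    (h : ∀ x ∈ K, p.eval x ^ 2 ≤ q.eval x ^ 2) : momentForm μ K p p ≤ momentForm μ K q q := by
  simp only [momentForm_apply, ← eval_mul]
  refine setIntegral_mono_on (integrableOn_eval μ K _) (integrableOn_eval μ K _)
    K.isCompact.measurableSet fun x hx ↦ ?_
  simpa only [eval_mul, sq] using h x hx

lemma sq_mul_momentForm_le {w : ℝ[X]} {a : ℝ} (ha : 0 ≤ a) (hw : ∀ x ∈ K, a ≤ |w.eval x|)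
    (p : ℝ[X]) : a ^ 2 * momentForm μ K p p ≤ momentForm μ K (w * p) (w * p) := by
  have hle : momentForm μ K (a • p) (a • p) ≤ momentForm μ K (w * p) (w * p) :=
    momentForm_self_le_of_sq_eval_le μ fun x hx ↦ by
      rw [eval_smul, eval_mul, smul_eq_mul, mul_pow, mul_pow, ← sq_abs (w.eval x)]
      gcongr
      exact hw x hx
  simpa [sq, mul_assoc] using hle

lemma momentForm_mul_le {w : ℝ[X]} {a : ℝ} (hw : ∀ x ∈ K, |w.eval x| ≤ a) (p : ℝ[X]) :
    momentForm μ K (w * p) (w * p) ≤ a ^ 2 * momentForm μ K p p := by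
  have hle : momentForm μ K (w * p) (w * p) ≤ momentForm μ K (a • p) (a • p) :=
    momentForm_self_le_of_sq_eval_le μ fun x hx ↦ by
      rw [eval_smul, eval_mul, smul_eq_mul, mul_pow, mul_pow, ← sq_abs (w.eval x)]
      gcongr
      exact hw x hx
  simpa [sq, mul_assoc] using hle

end MomentForm

section SobolevForm

variable {ι : Type*} [Fintype ι]

/-- The linear functional `p ↦ p^(k)(c)`. -/
def derivEval (c : ℝ) (k : ℕ) : ℝ[X] →ₗ[ℝ] ℝ := leval c ∘ₗ derivative ^ k

/-- The polynomial `∏ⱼ (X - cⱼ) ^ (dⱼ + 1)`, on whose multiples the discrete part of the Sobolev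
inner product vanishes. -/
def massPoly (c : ι → ℝ) (d : ι → ℕ) : ℝ[X] := ∏ j, (X - C (c j)) ^ (d j + 1)

lemma monic_massPoly (c : ι → ℝ) (d : ι → ℕ) : (massPoly c d).Monic :=
  monic_prod_of_monic _ _ fun _ _ ↦ (monic_X_sub_C _).pow _

lemma derivEval_eq_zero_of_massPoly_dvd {c : ι → ℝ} {d : ι → ℕ} {p : ℝ[X]}
    (hp : massPoly c d ∣ p) (j : ι) : derivEval (c j) (d j) p = 0 := by
  have hdvd : (X - C (c j)) ^ (d j + 1) ∣ p :=
    (Finset.dvd_prod_of_mem (fun i ↦ (X - C (c i)) ^ (d i + 1)) (Finset.mem_univ j)).trans hp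
  have hderiv := pow_sub_dvd_iterate_derivative_of_pow_dvd (d j) hdvd
  rw [Nat.add_sub_cancel_left, pow_one, dvd_iff_isRoot] at hderiv
  simpa [derivEval, Module.End.pow_apply] using hderiv

variable (μ : Measure ℝ) [IsFiniteMeasureOnCompacts μ] (K : TopologicalSpace.Compacts ℝ)
  (c : ι → ℝ) (d : ι → ℕ) (η : ι → ℝ)

/-- The discrete Sobolev inner product
`⟨p, q⟩ = ∫_K p q dμ + ∑ⱼ ηⱼ p^(dⱼ)(cⱼ) q^(dⱼ)(cⱼ)` as a bilinear form; it is `sobInner` when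
`K = [-1, 1]`. -/
def sobolevForm : LinearMap.BilinForm ℝ ℝ[X] :=
  momentForm μ K + ∑ j, η j • LinearMap.BilinForm.linMulLin (derivEval (c j) (d j))
    (derivEval (c j) (d j))

lemma sobolevForm_apply (p q : ℝ[X]) :
    sobolevForm μ K c d η p q = momentForm μ K p q +
      ∑ j, η j * (derivEval (c j) (d j) p * derivEval (c j) (d j) q) := by
  simp [sobolevForm, LinearMap.sum_apply]

lemma sobolevForm_eq_momentForm_of_massPoly_dvd {p : ℝ[X]} (hp : massPoly c d ∣ p) (q : ℝ[X]) :
    sobolevForm μ K c d η p q = momentForm μ K p q := by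
  simp [sobolevForm_apply, derivEval_eq_zero_of_massPoly_dvd hp]

variable {η}

lemma momentForm_self_le_sobolevForm_self (hη : ∀ j, 0 ≤ η j) (p : ℝ[X]) :
    momentForm μ K p p ≤ sobolevForm μ K c d η p p := by
  rw [sobolevForm_apply]
  exact le_add_of_nonneg_right <| Finset.sum_nonneg fun j _ ↦
    mul_nonneg (hη j) (mul_self_nonneg _)

lemma isPosSemidef_sobolevForm (hη : ∀ j, 0 ≤ η j) : (sobolevForm μ K c d η).IsPosSemidef where
  eq p q := by simp [sobolevForm_apply, (isPosSemidef_momentForm μ K).isSymm.eq p q, mul_comm]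
  isNonneg := ⟨fun p ↦ (momentForm_self_nonneg μ K p).trans
    (momentForm_self_le_sobolevForm_self μ K c d hη p)⟩

end SobolevForm

section ZeroBound

variable {ι : Type*} [Fintype ι] {μ : Measure ℝ} [IsFiniteMeasureOnCompacts μ]
  {K : TopologicalSpace.Compacts ℝ} {c : ι → ℝ} {d : ι → ℕ} {η : ι → ℝ}

lemma sq_sub_mul_momentForm_le_sobolevForm (hη : ∀ j, 0 ≤ η j) {n : ℕ} {P S : ℝ[X]}
    (hP : IsMonicOrthogonal (momentForm μ K) n P)
    (hS : S.Monic) (hSn : S.natDegree = n + 1)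
    {r z : ℝ} (hK : ∀ x ∈ K, |x| ≤ r) (hrz : r ≤ |z|) (hz : S.IsRoot z) :
    (|z| - r) ^ 2 * momentForm μ K P P ≤ sobolevForm μ K c d η S S := by
  obtain ⟨Q, rfl⟩ := dvd_iff_isRoot.2 hz
  have hQ : Q.Monic := (monic_X_sub_C z).of_mul_monic_left hS
  have hQn : Q.natDegree = n := by
    rw [(monic_X_sub_C z).natDegree_mul hQ, natDegree_X_sub_C] at hSn
    omega
  have hdist : ∀ x ∈ K, |z| - r ≤ |(X - C z).eval x| := fun x hx ↦ by
    rw [eval_sub, eval_X, eval_C, abs_sub_comm]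
    linarith [hK x hx, abs_sub_abs_le_abs_sub z x]
  calc
    (|z| - r) ^ 2 * momentForm μ K P P ≤ (|z| - r) ^ 2 * momentForm μ K Q Q := by
      gcongr
      exact hP.apply_self_le (isPosSemidef_momentForm μ K) hQ hQn
    _ ≤ momentForm μ K ((X - C z) * Q) ((X - C z) * Q) :=
      sq_mul_momentForm_le μ (sub_nonneg.2 hrz) hdist Q
    _ ≤ sobolevForm μ K c d η ((X - C z) * Q) ((X - C z) * Q) :=
      momentForm_self_le_sobolevForm_self μ K c d hη _

variable (μ K c d) in
lemma exists_sobolevForm_self_le_mul_momentForm (hη : ∀ j, 0 ≤ η j) :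
    ∃ A : ℝ, 0 ≤ A ∧ ∀ (m : ℕ) (P S : ℝ[X]), P.Monic → P.natDegree = m →
      IsMonicOrthogonal (sobolevForm μ K c d η) (m + (massPoly c d).natDegree + 1) S →
      sobolevForm μ K c d η S S ≤ A * momentForm μ K P P := by
  set w := massPoly c d * X with hw
  have hwm : w.Monic := (monic_massPoly c d).mul monic_X
  obtain ⟨A, hA⟩ := K.isCompact.exists_bound_of_continuousOn w.continuous.continuousOn
  refine ⟨A ^ 2, sq_nonneg A, fun m P S hP hPm hS ↦ ?_⟩
  have hwP : (w * P).natDegree = m + (massPoly c d).natDegree + 1 := by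
    rw [hwm.natDegree_mul hP, hw, (monic_massPoly c d).natDegree_mul monic_X, natDegree_X, hPm]
    omega
  calc
    sobolevForm μ K c d η S S ≤ sobolevForm μ K c d η (w * P) (w * P) :=
      hS.apply_self_le (isPosSemidef_sobolevForm μ K c d hη) (hwm.mul hP) hwP
    _ = momentForm μ K (w * P) (w * P) :=
      sobolevForm_eq_momentForm_of_massPoly_dvd μ K c d η ((dvd_mul_right _ _).mul_right _) _
    _ ≤ A ^ 2 * momentForm μ K P P := momentForm_mul_le μ hA P

lemma exists_eventually_abs_root_le (hη : ∀ j, 0 ≤ η j) {S P : ℕ → ℝ[X]}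
    (hS : ∀ n, IsMonicOrthogonal (sobolevForm μ K c d η) n (S n))
    (hP : ∀ n, IsMonicOrthogonal (momentForm μ K) n (P n))
    (hpos : ∀ n, 0 < momentForm μ K (P n) (P n)) {ε : ℝ} (hε : 0 < ε)
    (hratio : ∀ᶠ n in atTop,
      ε * momentForm μ K (P n) (P n) ≤ momentForm μ K (P (n + 1)) (P (n + 1))) :
    ∃ R : ℝ, ∀ᶠ n in atTop, ∀ z, (S n).IsRoot z → |z| ≤ R := by
  obtain ⟨r, hr⟩ := K.isCompact.isBounded.exists_norm_le
  obtain ⟨A, hA, hSA⟩ := exists_sobolevForm_self_le_mul_momentForm μ K c d hη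
  obtain ⟨n₁, hn₁⟩ := eventually_atTop.1 hratio
  set D := (massPoly c d).natDegree
  refine ⟨r + √(A / ε ^ D), eventually_atTop.2 ⟨n₁ + D + 1, fun n hn z hz ↦ ?_⟩⟩
  obtain ⟨m, rfl⟩ : ∃ m, n = m + D + 1 := ⟨n - D - 1, by omega⟩
  rcases le_total |z| r with hzr | hrz
  · exact hzr.trans (le_add_of_nonneg_right (Real.sqrt_nonneg _))
  have hgeom : ε ^ D * momentForm μ K (P m) (P m) ≤ momentForm μ K (P (m + D)) (P (m + D)) :=
    geom_le (u := fun j ↦ momentForm μ K (P (m + j)) (P (m + j))) hε.le D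
      fun j _ ↦ hn₁ (m + j) (by omega)
  have hsq : (|z| - r) ^ 2 * momentForm μ K (P (m + D)) (P (m + D)) ≤
      A / ε ^ D * momentForm μ K (P (m + D)) (P (m + D)) :=
    calc
      _ ≤ sobolevForm μ K c d η (S (m + D + 1)) (S (m + D + 1)) :=
        sq_sub_mul_momentForm_le_sobolevForm hη (hP _) (hS _).monic (hS _).natDegree_eq hr hrz hz
      _ ≤ A * momentForm μ K (P m) (P m) :=
        hSA m _ _ (hP m).monic (hP m).natDegree_eq (hS _)
      _ = A / ε ^ D * (ε ^ D * momentForm μ K (P m) (P m)) := by field_simp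
      _ ≤ A / ε ^ D * momentForm μ K (P (m + D)) (P (m + D)) := by gcongr
  have hroot : |z| - r ≤ √(A / ε ^ D) := Real.le_sqrt_of_sq_le (le_of_mul_le_mul_right hsq (hpos _))
  linarith

end ZeroBound

section UnitSegment

/-- The interval `[-1, 1]` as a bundled compact set. -/
def unitSegment : TopologicalSpace.Compacts ℝ := ⟨Set.Icc (-1) 1, isCompact_Icc⟩

lemma coe_unitSegment : (unitSegment : Set ℝ) = Set.Icc (-1) 1 := rfl

lemma sobolevForm_unitSegment_apply (μ : Measure ℝ) [IsFiniteMeasureOnCompacts μ] {N : ℕ}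
    (c : Fin N → ℝ) (d : Fin N → ℕ) (η : Fin N → ℝ) (p q : ℝ[X]) :
    sobolevForm μ unitSegment c d η p q = sobInner μ c d η p q := by
  simp [sobolevForm_apply, sobInner, momentForm_apply, coe_unitSegment, derivEval,
    Module.End.pow_apply, mul_assoc]

lemma NevaiClass.exists_isMonicOrthogonal_mul_le_succ {μ : Measure ℝ} [IsFiniteMeasureOnCompacts μ]
    (hμ : NevaiClass μ) :
    ∃ P : ℕ → ℝ[X], (∀ n, IsMonicOrthogonal (momentForm μ unitSegment) n (P n)) ∧
      ∀ ε < 1 / 4, ∀ᶠ n in atTop, ε * momentForm μ unitSegment (P n) (P n) ≤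
        momentForm μ unitSegment (P (n + 1)) (P (n + 1)) := by
  obtain ⟨-, -, P, a, b, hmonic, hdegree, horth, -, -, hrec, ha, -⟩ := hμ
  have hP (n : ℕ) : IsMonicOrthogonal (momentForm μ unitSegment) n (P n) :=
    ⟨hmonic n, hdegree n, by simpa [momentForm_apply, coe_unitSegment] using horth n⟩
  refine ⟨P, hP, fun ε hε ↦ ?_⟩
  have hsq : Tendsto (fun n ↦ a (n + 1) ^ 2) atTop (nhds (1 / 4)) := by
    convert (ha.comp (tendsto_add_atTop_nat 1)).pow 2 using 2 <;> norm_num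
  filter_upwards [hsq.eventually_const_le hε] with n hn
  rw [(hP n).apply_self_succ (momentForm_X_mul μ unitSegment) (hP (n + 1)) (hP (n + 2)) (hrec n)]
  exact mul_le_mul_of_nonneg_right hn (momentForm_self_nonneg μ unitSegment _)

end UnitSegment

theorem statement18_general {ι : Type*} [Fintype ι] {μ : Measure ℝ} [IsFiniteMeasureOnCompacts μ]
    {K : TopologicalSpace.Compacts ℝ} {c : ι → ℝ} {d : ι → ℕ} {η : ι → ℝ} (hη : ∀ j, 0 ≤ η j)
    {S P T : ℕ → ℝ[X]} (hS : ∀ n, IsMonicOrthogonal (sobolevForm μ K c d η) n (S n))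
    (hP : ∀ n, IsMonicOrthogonal (momentForm μ K) n (P n))
    (hpos : ∀ n, 0 < momentForm μ K (P n) (P n)) {ε : ℝ} (hε : 0 < ε)
    (hratio : ∀ᶠ n in atTop,
      ε * momentForm μ K (P n) (P n) ≤ momentForm μ K (P (n + 1)) (P (n + 1)))
    {N : ℕ} (hT : ∀ᶠ n in atTop,
      (T n).Monic ∧ (T n).natDegree = N ∧ (T n).Splits ∧ T n ∣ S n) (q : ℝ[X]) :
    ∃ M : ℝ, ∀ n, |∫ x in K, (T n).eval x * q.eval x ∂μ| ≤ M := by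
  obtain ⟨R, hR⟩ := exists_eventually_abs_root_le hη hS hP hpos hε hratio
  obtain ⟨r, hr⟩ := K.isCompact.isBounded.exists_norm_le
  obtain ⟨A, hA⟩ := K.isCompact.exists_bound_of_continuousOn q.continuous.continuousOn
  suffices hbdd : IsBoundedUnder (· ≤ ·) atTop fun n ↦ |∫ x in K, (T n).eval x * q.eval x ∂μ| by
    obtain ⟨M, hM⟩ := hbdd.bddAbove_range
    exact ⟨M, fun n ↦ hM (Set.mem_range_self n)⟩
  refine isBoundedUnder_of_eventually_le (a := (r + R) ^ N * A * μ.real K) ?_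
  filter_upwards [hR, hT] with n hroots ⟨hmonic, hdegree, hsplits, hdvd⟩
  rw [← Real.norm_eq_abs]
  refine norm_setIntegral_le_of_norm_le_const K.isCompact.measure_lt_top fun x hx ↦ ?_
  have hTx : ‖(T n).eval x‖ ≤ (r + R) ^ N := hdegree ▸
    norm_eval_le_pow_natDegree_of_splits hmonic hsplits fun z hz ↦
      (norm_sub_le x z).trans (add_le_add (hr x hx) (hroots z ((isRoot_of_mem_roots hz).dvd hdvd)))
  exact norm_mul_le_of_le hTx (hA x hx)

/-- The total masses of the measures `dμ_{ρ,n} = S⁺_{n+k,2} ρ dμ`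
are uniformly bounded in `n`. -/
theorem statement18
    (μ : Measure ℝ) [IsFiniteMeasure μ]
    (hμsupp : μ (Set.Icc (-1:ℝ) 1)ᶜ = 0)
    (hμinf : ∀ p : Polynomial ℝ, p ≠ 0 → 0 < ∫ x in Set.Icc (-1:ℝ) 1, (p.eval x) ^ 2 ∂μ)
    {N : ℕ} (c : Fin N → ℝ) (d : Fin N → ℕ)
    (hc : ∀ j, c j ∉ Set.Icc (-1:ℝ) 1)
    (η : Fin N → ℝ) (hη : ∀ j, 0 < η j)
    (hseq : SeqOrdered c d)
    (S : ℕ → Polynomial ℝ)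
    (hSmonic : ∀ n, (S n).Monic) (hSdeg : ∀ n, (S n).natDegree = n)
    (hSorth : ∀ n, ∀ m < n, sobInner μ c d η (X ^ m) (S n) = 0)
    (S1 S2 : ℕ → Polynomial ℝ) (n₀ : ℕ)
    (hfact : ∀ n, n₀ ≤ n → S n = S1 n * S2 n)
    (hS1 : ∀ n, n₀ ≤ n → (S1 n).Monic ∧ (S1 n).natDegree = n - N ∧
      (S1 n).roots.Nodup ∧ Multiset.card (S1 n).roots = n - N ∧
      ∀ x ∈ (S1 n).roots, x ∈ Set.Ioo (-1:ℝ) 1)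
    (hS2 : ∀ n, n₀ ≤ n → (S2 n).Monic ∧ (S2 n).natDegree = N ∧
      Multiset.card (S2 n).roots = N ∧ ∀ x ∈ (S2 n).roots, x ∉ Set.Icc (-1:ℝ) 1)
    (hNevai : NevaiClass μ)
    (k : ℕ) (hk : 1 ≤ k) :
    ∃ M : ℝ, 0 < M ∧ ∀ n : ℕ,
      (∫ x in Set.Icc (-1:ℝ) 1,
        ((-1:ℝ) ^ nuCount c * (S2 (n + k)).eval x) * (rhoPoly c d).eval x ∂μ) ≤ M := by
  obtain ⟨P, hP, hratio⟩ := hNevai.exists_isMonicOrthogonal_mul_le_succ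
  have hS (n : ℕ) : IsMonicOrthogonal (sobolevForm μ unitSegment c d η) n (S n) :=
    ⟨hSmonic n, hSdeg n, by simpa only [sobolevForm_unitSegment_apply] using hSorth n⟩
  have hpos (n : ℕ) : 0 < momentForm μ unitSegment (P n) (P n) := by
    simpa only [momentForm_apply, coe_unitSegment, ← sq] using hμinf (P n) (hP n).monic.ne_zero
  have hfactor : ∀ᶠ n in atTop,
      (S2 n).Monic ∧ (S2 n).natDegree = N ∧ (S2 n).Splits ∧ S2 n ∣ S n := by
    filter_upwards [eventually_ge_atTop n₀] with n hn
    obtain ⟨hmonic, hdegree, hcard, -⟩ := hS2 n hn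
    exact ⟨hmonic, hdegree, splits_iff_card_roots.2 (hcard.trans hdegree.symm),
      hfact n hn ▸ dvd_mul_left _ _⟩
  obtain ⟨M, hM⟩ := statement18_general (fun j ↦ (hη j).le) hS hP hpos (ε := 1 / 8) (by norm_num)
    (hratio _ (by norm_num)) hfactor (C ((-1) ^ nuCount c) * rhoPoly c d)
  refine ⟨max M 1, by positivity, fun n ↦ le_max_of_le_left ?_⟩
  refine le_of_eq_of_le ?_ ((le_abs_self _).trans (hM (n + k)))
  simp [coe_unitSegment, mul_left_comm, mul_assoc]

end
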